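/- In the nested computationally budgeted model-selection setup specialized to linear classification in increasing dimensions—where class i uses nᵢ(t) = n·t/dᵢ samples under budget t and penᵢ(t) = √(dᵢ/nᵢ(t)) = dᵢ/√(n·t)—assume n·T ≥ 1 and n·T ≥ d₁/B. Then with probability at least 1 − 2c₁·exp(−m), the output f of the coarse-grid model-selection algorithm satisfies R(f) ≤ inf_{i=1,2,…} { Rᵢ* + √(dᵢ·log₂(16B·nT/d₁)/(nT)) · ( 4√dᵢ + √8·c₂·√(m + log log₂(16B·nT/d₁)) ) }. -/

import Mathlib

open MeasureTheory

/-!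
Give each grid class the deviation `ε = (√(m/ν) + √(log s/ν))/2`, for which the tail
`c₁ exp (-4νε²)` is at most `c₁ exp (-m)/s`. A union bound over the at most `s` grid classes, once
for the estimators and once for near-optimal comparators, then shows that outside an event of
probability `2 c₁ exp (-m)` the selected risk is at most `Rᵢ* + p̄ᵢ` for every grid class `i`.
Since the grid doubles the composite penalty, every class `i` with `2 p̄ᵢ < 2ˢ p̄₁` lies in some
grid class whose penalty is at most `2 p̄ᵢ`; for the other classes `2 p̄ᵢ` is at least `R₁* + p̄₁`,
and the first grid class already suffices. It remains to bound `2 p̄ᵢ` with the explicit `nᵢ` and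
`penᵢ`, using `s ≤ log₂ (16 B nT/d₁)`.
-/

section ConfidenceRadius

/-- The deviation `ε` at which the concentration bounds are applied to a class with `ν` samples:
`m` is the confidence parameter and `l` the logarithm of the number of classes in the union
bound. -/
noncomputable def confidenceRadius (m l ν : ℝ) : ℝ := (√(m / ν) + √(l / ν)) / 2

variable {m l ν : ℝ}

lemma confidenceRadius_pos (hl : 0 < l) (hν : 0 < ν) : 0 < confidenceRadius m l ν := by
  unfold confidenceRadius
  positivity

lemma add_le_four_mul_confidenceRadius_sq (hm : 0 ≤ m) (hl : 0 ≤ l) (hν : 0 < ν) :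
    m + l ≤ 4 * ν * confidenceRadius m l ν ^ 2 := by
  calc m + l = ν * √(m / ν) ^ 2 + ν * √(l / ν) ^ 2 := by
        rw [Real.sq_sqrt (by positivity), Real.sq_sqrt (by positivity),
          mul_div_cancel₀ _ hν.ne', mul_div_cancel₀ _ hν.ne']
    _ ≤ ν * √(m / ν) ^ 2 + ν * √(l / ν) ^ 2 + 2 * (ν * (√(m / ν) * √(l / ν))) :=
        le_add_of_nonneg_right (by positivity)
    _ = 4 * ν * confidenceRadius m l ν ^ 2 := by unfold confidenceRadius; ring

lemma two_mul_confidenceRadius_le_sqrt (hm : 0 ≤ m) (hl : 0 ≤ l) (hν : 0 < ν) :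
    2 * confidenceRadius m l ν ≤ √(2 * (m + l) / ν) := by
  apply Real.le_sqrt_of_sq_le
  calc (2 * confidenceRadius m l ν) ^ 2 = (√(m / ν) + √(l / ν)) ^ 2 := by
        unfold confidenceRadius; ring
    _ ≤ 2 * (√(m / ν) ^ 2 + √(l / ν) ^ 2) := add_sq_le
    _ = 2 * (m + l) / ν := by
        rw [Real.sq_sqrt (by positivity), Real.sq_sqrt (by positivity)]; ring

lemma exp_neg_confidenceRadius_sq_le {s : ℝ} (hm : 0 ≤ m) (hs : 1 ≤ s) (hν : 0 < ν) :
    Real.exp (-4 * ν * confidenceRadius m (Real.log s) ν ^ 2) ≤ Real.exp (-m) / s := by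
  have hexp : Real.exp (-m) / s = Real.exp (-m - Real.log s) := by
    rw [Real.exp_sub, Real.exp_log (by linarith)]
  rw [hexp, Real.exp_le_exp]
  linarith [add_le_four_mul_confidenceRadius_sq hm (Real.log_nonneg hs) hν]

end ConfidenceRadius

section Penalties

/-- The composite penalty `p̄` of a class with `ν` samples and penalty `pen`, when `s` classes
share the budget. -/
noncomputable def compositePenalty (c₂ m : ℝ) (s : ℕ) (ν pen : ℝ) : ℝ :=
  2 * pen + c₂ * √(2 * (m + Real.log s) / ν)

/-- The penalized empirical risk minimized by the model-selection step; `L` is the empirical risk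
of the estimator of a class with `ν` samples and penalty `pen`. -/
noncomputable def selectionCriterion (c₂ m : ℝ) (s : ℕ) (ν pen L : ℝ) : ℝ :=
  L + pen + c₂ / 2 * √(m / ν) + c₂ / 2 * √(Real.log s / ν)

variable {c₂ m ν pen : ℝ} {s : ℕ}

lemma selectionCriterion_eq (c₂ m : ℝ) (s : ℕ) (ν pen L : ℝ) :
    selectionCriterion c₂ m s ν pen L = L + pen + c₂ * confidenceRadius m (Real.log s) ν := by
  unfold selectionCriterion confidenceRadius
  ring

lemma two_mul_add_confidenceRadius_le_compositePenalty (hc₂ : 0 ≤ c₂) (hm : 0 ≤ m) (hν : 0 < ν) :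
    2 * (pen + c₂ * confidenceRadius m (Real.log s) ν) ≤ compositePenalty c₂ m s ν pen := by
  have := mul_le_mul_of_nonneg_left
    (two_mul_confidenceRadius_le_sqrt hm (Real.log_natCast_nonneg s) hν) hc₂
  unfold compositePenalty
  linarith

lemma risk_le_add_compositePenalty_of_selectionCriterion_le {νsel penSel Lsel Rsel Lest Lf Rf : ℝ}
    (hc₂ : 0 ≤ c₂) (hm : 0 ≤ m) (hν : 0 < ν)
    (hcrit : selectionCriterion c₂ m s νsel penSel Lsel ≤ selectionCriterion c₂ m s ν pen Lest)
    (hsel : |Lsel - Rsel| ≤ penSel + c₂ * confidenceRadius m (Real.log s) νsel)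
    (hERM : Lest ≤ Lf + pen) (hf : |Lf - Rf| ≤ c₂ * confidenceRadius m (Real.log s) ν) :
    Rsel ≤ Rf + compositePenalty c₂ m s ν pen := by
  rw [selectionCriterion_eq, selectionCriterion_eq] at hcrit
  calc Rsel ≤ Lsel + penSel + c₂ * confidenceRadius m (Real.log s) νsel := by
        linarith [neg_le_of_abs_le hsel]
    _ ≤ Lest + pen + c₂ * confidenceRadius m (Real.log s) ν := hcrit
    _ ≤ Rf + 2 * (pen + c₂ * confidenceRadius m (Real.log s) ν) := by
        linarith [le_of_abs_le hf]
    _ ≤ Rf + compositePenalty c₂ m s ν pen := by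
        gcongr
        exact two_mul_add_confidenceRadius_le_compositePenalty hc₂ hm hν

lemma compositePenalty_le_compositePenalty {ν' pen' : ℝ} (hc₂ : 0 ≤ c₂) (hm : 0 ≤ m) (hν' : 0 < ν')
    (hν : ν' ≤ ν) (hpen : pen ≤ pen') :
    compositePenalty c₂ m s ν pen ≤ compositePenalty c₂ m s ν' pen' := by
  have := Real.log_natCast_nonneg s
  unfold compositePenalty
  gcongr

end Penalties

section MeasureBounds

variable {Ω ι : Type*} [MeasurableSpace Ω] {P : Measure Ω}

lemma measure_biUnion_finset_le_of_card_le {S : Finset ι} {s : ℕ} (hs : 0 < s) (hS : S.card ≤ s)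
    {A : ι → Set Ω} {x : ℝ} (hA : ∀ i ∈ S, P (A i) ≤ ENNReal.ofReal (x / s)) :
    P (⋃ i ∈ S, A i) ≤ ENNReal.ofReal x := by
  calc P (⋃ i ∈ S, A i) ≤ ∑ i ∈ S, P (A i) := measure_biUnion_finset_le S A
    _ ≤ S.card • ENNReal.ofReal (x / s) := Finset.sum_le_card_nsmul S _ _ hA
    _ ≤ s • ENNReal.ofReal (x / s) := by gcongr
    _ = ENNReal.ofReal x := by
        rw [← ENNReal.ofReal_nsmul, nsmul_eq_mul, mul_div_cancel₀ _ (by positivity)]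

lemma measure_exists_lt_le_of_forall_pos {S : Set ι} {a : ι → ℝ} {X : Ω → ℝ} {C : ENNReal}
    (h : ∀ δ : ℝ, 0 < δ → P {ω | ∃ i ∈ S, a i + δ < X ω} ≤ C) :
    P {ω | ∃ i ∈ S, a i < X ω} ≤ C := by
  let A : ℕ → Set Ω := fun q ↦ {ω | ∃ i ∈ S, a i + 1 / ((q : ℝ) + 1) < X ω}
  have hA_mono : Monotone A := by
    rintro q r hqr ω ⟨i, hi, hlt⟩
    have : 1 / ((r : ℝ) + 1) ≤ 1 / ((q : ℝ) + 1) := Nat.one_div_le_one_div hqr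
    exact ⟨i, hi, by linarith⟩
  have hsub : {ω | ∃ i ∈ S, a i < X ω} ⊆ ⋃ q, A q := by
    rintro ω ⟨i, hi, hlt⟩
    obtain ⟨q, hq⟩ := exists_nat_one_div_lt (sub_pos.2 hlt)
    exact Set.mem_iUnion.2 ⟨q, i, hi, by linarith⟩
  calc P {ω | ∃ i ∈ S, a i < X ω} ≤ P (⋃ q, A q) := measure_mono hsub
    _ = ⨆ q, P (A q) := hA_mono.measure_iUnion
    _ ≤ C := iSup_le fun q ↦ h _ (by positivity)

lemma ofReal_one_sub_le_measure_of_compl_le [IsProbabilityMeasure P] {G : Set Ω} {x : ℝ}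
    (hx : 0 ≤ x) (hG : P Gᶜ ≤ ENNReal.ofReal x) : ENNReal.ofReal (1 - x) ≤ P G := by
  rw [ENNReal.ofReal_sub _ hx, ENNReal.ofReal_one, tsub_le_iff_right, ← measure_univ (μ := P)]
  exact (measure_univ_le_add_compl G).trans (by gcongr)

end MeasureBounds

section ModelSelection

variable {Ω F ι : Type*} [MeasurableSpace Ω] {P : Measure Ω} {𝓕 : ι → Set F} {R : F → ℝ}
  {Rstar : ι → ℝ} {c₁ c₂ m : ℝ} {s : ℕ} {ν pen : ι → ℝ} {fhat : ι → Ω → F} {Lhat : ι → Ω → F → ℝ}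
  {ihat : Ω → ι}

/-- The guarantees for the learner of one class `C` given a fixed budget: the estimator `fhat`
minimizes the empirical risk `Lhat` over `C` up to `pen`, and `Lhat` concentrates around the risk
`R` at the rate of `ν` samples, both at `fhat` (up to `pen`) and at each fixed element of `C`. -/
structure IsConcentratedERM (P : Measure Ω) (C : Set F) (R : F → ℝ) (ν pen c₁ c₂ : ℝ)
    (fhat : Ω → F) (Lhat : Ω → F → ℝ) : Prop where
  ae_le_add_pen : ∀ᵐ ω ∂P, ∀ f ∈ C, Lhat ω (fhat ω) ≤ Lhat ω f + pen
  measure_estimator_le : ∀ ε : ℝ, 0 < ε →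
    P {ω | pen + c₂ * ε < |Lhat ω (fhat ω) - R (fhat ω)|}
      ≤ ENNReal.ofReal (c₁ * Real.exp (-4 * ν * ε ^ 2))
  measure_fixed_le : ∀ f ∈ C, ∀ ε : ℝ, 0 < ε →
    P {ω | c₂ * ε < |Lhat ω f - R f|} ≤ ENNReal.ofReal (c₁ * Real.exp (-4 * ν * ε ^ 2))

lemma measure_biUnion_le_of_confidenceRadius {S : Finset ι} (hc₁ : 0 ≤ c₁) (hm : 0 ≤ m)
    (hs : 1 < s) (hS : S.card ≤ s) (hν : ∀ i ∈ S, 0 < ν i) {A : ι → ℝ → Set Ω}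
    (hA : ∀ i ∈ S, ∀ ε : ℝ, 0 < ε →
      P (A i ε) ≤ ENNReal.ofReal (c₁ * Real.exp (-4 * ν i * ε ^ 2))) :
    P (⋃ i ∈ S, A i (confidenceRadius m (Real.log s) (ν i)))
      ≤ ENNReal.ofReal (c₁ * Real.exp (-m)) := by
  have hs' : (1 : ℝ) < s := by exact_mod_cast hs
  refine measure_biUnion_finset_le_of_card_le (by omega) hS fun i hi ↦
    (hA i hi _ (confidenceRadius_pos (Real.log_pos hs') (hν i hi))).trans ?_
  rw [mul_div_assoc]
  gcongr
  exact exp_neg_confidenceRadius_sq_le hm hs'.le (hν i hi)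

lemma measure_exists_comparator_add_lt_le {S : Finset ι} (hc₁ : 0 ≤ c₁) (hc₂ : 0 ≤ c₂) (hm : 0 ≤ m)
    (hs : 1 < s) (hS : S.card ≤ s) (hν : ∀ i ∈ S, 0 < ν i)
    (hERM : ∀ i ∈ S, IsConcentratedERM P (𝓕 i) R (ν i) (pen i) c₁ c₂ (fhat i) (Lhat i))
    (hihat : ∀ ω, ihat ω ∈ S)
    (hmin : ∀ ω, ∀ i ∈ S,
      selectionCriterion c₂ m s (ν (ihat ω)) (pen (ihat ω)) (Lhat (ihat ω) ω (fhat (ihat ω) ω))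
        ≤ selectionCriterion c₂ m s (ν i) (pen i) (Lhat i ω (fhat i ω)))
    {g : ι → F} (hg : ∀ i ∈ S, g i ∈ 𝓕 i) :
    P {ω | ∃ i ∈ S, R (g i) + compositePenalty c₂ m s (ν i) (pen i) < R (fhat (ihat ω) ω)}
      ≤ ENNReal.ofReal (2 * c₁ * Real.exp (-m)) := by
  let ε : ι → ℝ := fun i ↦ confidenceRadius m (Real.log s) (ν i)
  let estimatorBad : Set Ω :=
    ⋃ i ∈ S, {ω | pen i + c₂ * ε i < |Lhat i ω (fhat i ω) - R (fhat i ω)|}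
  let comparatorBad : Set Ω := ⋃ i ∈ S, {ω | c₂ * ε i < |Lhat i ω (g i) - R (g i)|}
  have hestimator : P estimatorBad ≤ ENNReal.ofReal (c₁ * Real.exp (-m)) :=
    measure_biUnion_le_of_confidenceRadius hc₁ hm hs hS hν
      (A := fun i ε ↦ {ω | pen i + c₂ * ε < |Lhat i ω (fhat i ω) - R (fhat i ω)|})
      fun i hi ↦ (hERM i hi).measure_estimator_le
  have hcomparator : P comparatorBad ≤ ENNReal.ofReal (c₁ * Real.exp (-m)) :=
    measure_biUnion_le_of_confidenceRadius hc₁ hm hs hS hν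
      (A := fun i ε ↦ {ω | c₂ * ε < |Lhat i ω (g i) - R (g i)|})
      fun i hi ↦ (hERM i hi).measure_fixed_le (g i) (hg i hi)
  have hsub : ∀ᵐ ω ∂P,
      (∃ i ∈ S, R (g i) + compositePenalty c₂ m s (ν i) (pen i) < R (fhat (ihat ω) ω)) →
        ω ∈ estimatorBad ∪ comparatorBad := by
    filter_upwards [(Filter.eventually_all_finset S).2 fun i hi ↦ (hERM i hi).ae_le_add_pen]
      with ω hω
    rintro ⟨i, hi, hlt⟩
    by_contra hgood
    simp only [estimatorBad, comparatorBad, Set.mem_union, Set.mem_iUnion₂, Set.mem_ofPred_eq,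
      not_or, not_exists, not_lt] at hgood
    exact hlt.not_ge (risk_le_add_compositePenalty_of_selectionCriterion_le hc₂ hm (hν i hi)
      (hmin ω i hi) (hgood.1 _ (hihat ω)) (hω i hi _ (hg i hi)) (hgood.2 i hi))
  calc _ ≤ P (estimatorBad ∪ comparatorBad) := measure_mono_ae hsub
    _ ≤ P estimatorBad + P comparatorBad := measure_union_le _ _
    _ ≤ ENNReal.ofReal (c₁ * Real.exp (-m)) + ENNReal.ofReal (c₁ * Real.exp (-m)) := by gcongr
    _ = ENNReal.ofReal (2 * c₁ * Real.exp (-m)) := by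
        rw [← ENNReal.ofReal_add (by positivity) (by positivity)]; ring_nf

lemma measure_exists_isGLB_add_lt_le {S : Finset ι} (hc₁ : 0 ≤ c₁) (hc₂ : 0 ≤ c₂) (hm : 0 ≤ m)
    (hs : 1 < s) (hS : S.card ≤ s) (hν : ∀ i ∈ S, 0 < ν i)
    (hRstar : ∀ i, IsGLB (R '' 𝓕 i) (Rstar i))
    (hERM : ∀ i ∈ S, IsConcentratedERM P (𝓕 i) R (ν i) (pen i) c₁ c₂ (fhat i) (Lhat i))
    (hihat : ∀ ω, ihat ω ∈ S)
    (hmin : ∀ ω, ∀ i ∈ S,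
      selectionCriterion c₂ m s (ν (ihat ω)) (pen (ihat ω)) (Lhat (ihat ω) ω (fhat (ihat ω) ω))
        ≤ selectionCriterion c₂ m s (ν i) (pen i) (Lhat i ω (fhat i ω))) :
    P {ω | ∃ i ∈ S, Rstar i + compositePenalty c₂ m s (ν i) (pen i) < R (fhat (ihat ω) ω)}
      ≤ ENNReal.ofReal (2 * c₁ * Real.exp (-m)) := by
  refine measure_exists_lt_le_of_forall_pos (S := (S : Set ι)) fun δ hδ ↦ ?_
  have hnear : ∀ i, ∃ f ∈ 𝓕 i, R f < Rstar i + δ := fun i ↦ by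
    obtain ⟨_, ⟨f, hf, rfl⟩, -, hlt⟩ := (hRstar i).exists_between_self_add hδ
    exact ⟨f, hf, hlt⟩
  choose g hg hgR using hnear
  refine (measure_mono ?_).trans (measure_exists_comparator_add_lt_le hc₁ hc₂ hm hs hS hν hERM
    hihat hmin fun i _ ↦ hg i)
  rintro ω ⟨i, hi, hlt⟩
  exact ⟨i, hi, by linarith [hgR i]⟩

end ModelSelection

section CoarseGrid

lemma exists_lt_two_pow_mul_mem_Icc {a b : ℝ} {s : ℕ} (hb : 0 < b) (hba : b ≤ a)
    (has : 2 * a < 2 ^ s * b) : ∃ k < s, 2 ^ k * b ∈ Set.Icc a (2 * a) := by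
  obtain ⟨k, hle, hlt⟩ := exists_nat_pow_near ((one_le_div hb).2 hba) one_lt_two
  rw [le_div_iff₀ hb] at hle
  rw [div_lt_iff₀ hb] at hlt
  have hle' : 2 ^ (k + 1) * b ≤ 2 * a := by rw [pow_succ]; linarith
  have hpow : (2 : ℝ) ^ (k + 1) < 2 ^ s := lt_of_mul_lt_mul_right (hle'.trans_lt has) hb.le
  exact ⟨k + 1, (pow_lt_pow_iff_right₀ one_lt_two).1 hpow, hlt.le, hle'⟩

variable {ι : Type*} [Preorder ι] {i₀ : ι} {r p : ι → ℝ} {s : ℕ} {jj : ℕ → ι}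

lemma exists_grid_add_le_add_two_mul (hs : 0 < s) (hr : Antitone r) (hr0 : ∀ i, 0 ≤ r i)
    (hp0 : 0 < p i₀) (hp : ∀ i, p i₀ ≤ p i) (hri₀ : r i₀ + p i₀ ≤ 2 ^ s * p i₀)
    (hjj : ∀ k < s, IsGreatest {j | p j ≤ 2 ^ k * p i₀} (jj k)) (i : ι) :
    ∃ k < s, r (jj k) + p (jj k) ≤ r i + 2 * p i := by
  rcases lt_or_ge (2 * p i) (2 ^ s * p i₀) with hsmall | hlarge
  · obtain ⟨k, hk, hik, hki⟩ := exists_lt_two_pow_mul_mem_Icc hp0 (hp i) hsmall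
    have hjk : p (jj k) ≤ 2 ^ k * p i₀ := (hjj k hk).1
    have hrk : r (jj k) ≤ r i := hr ((hjj k hk).2 hik)
    exact ⟨k, hk, by linarith⟩
  · have hj0 : p (jj 0) ≤ p i₀ := by simpa using (hjj 0 hs).1
    have hr0' : r (jj 0) ≤ r i₀ := hr ((hjj 0 hs).2 (by simp))
    exact ⟨0, hs, by linarith [hr0 i]⟩

/-- The number of grid classes, where `Y` stands for `B n₁(T)`. -/
noncomputable def gridSize (Y : ℝ) : ℕ := ⌈Real.logb 2 (1 + Y)⌉₊ + 2

lemma one_lt_gridSize (Y : ℝ) : 1 < gridSize Y := by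
  unfold gridSize
  omega

lemma gridSize_le_logb {Y : ℝ} (hY : 1 ≤ Y) : (gridSize Y : ℝ) ≤ Real.logb 2 (16 * Y) := by
  have hceil : (⌈Real.logb 2 (1 + Y)⌉₊ : ℝ) < Real.logb 2 (1 + Y) + 1 :=
    Nat.ceil_lt_add_one (Real.logb_nonneg one_lt_two (by linarith))
  have hmono : Real.logb 2 (1 + Y) ≤ Real.logb 2 (2 * Y) :=
    Real.logb_le_logb_of_le one_lt_two (by linarith) (by linarith)
  have hmul : Real.logb 2 (16 * Y) = 3 + Real.logb 2 (2 * Y) := by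
    rw [show 16 * Y = 2 ^ (3 : ℝ) * (2 * Y) by norm_num; ring,
      Real.logb_mul (by positivity) (by positivity), Real.logb_rpow two_pos (by norm_num)]
  rw [gridSize, hmul]
  push_cast
  linarith

lemma one_add_le_two_pow_gridSize {Y : ℝ} (hY : -1 < Y) : 1 + Y ≤ 2 ^ gridSize Y := by
  calc 1 + Y ≤ (2 : ℝ) ^ (⌈Real.logb 2 (1 + Y)⌉₊ : ℝ) :=
        (Real.logb_le_iff_le_rpow one_lt_two (by linarith)).1 (Nat.le_ceil _)
    _ = 2 ^ ⌈Real.logb 2 (1 + Y)⌉₊ := Real.rpow_natCast _ _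
    _ ≤ 2 ^ gridSize Y := pow_le_pow_right₀ one_le_two (Nat.le_add_right _ 2)

variable {Ω F : Type*} [MeasurableSpace Ω] {P : Measure Ω} {𝓕 : ι → Set F} {R : F → ℝ}
  {Rstar : ι → ℝ} {c₁ c₂ m : ℝ} {ν pen : ι → ℝ} {fhat : ι → Ω → F} {Lhat : ι → Ω → F → ℝ}
  {ihat : Ω → ι}

theorem coarseGrid_oracle_inequality [IsProbabilityMeasure P] [DecidableEq ι] (h𝓕 : Monotone 𝓕)
    (hR : ∀ f, 0 ≤ R f) (hRstar : ∀ i, IsGLB (R '' 𝓕 i) (Rstar i))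
    (hc₁ : 0 ≤ c₁) (hc₂ : 0 ≤ c₂) (hm : 0 ≤ m) (hs : 1 < s) (hν : ∀ i, 0 < ν i)
    (hERM : ∀ i, IsConcentratedERM P (𝓕 i) R (ν i) (pen i) c₁ c₂ (fhat i) (Lhat i))
    (hp : ∀ i, p i = compositePenalty c₂ m s (ν i) (pen i))
    (hp0 : 0 < p i₀) (hpmin : ∀ i, p i₀ ≤ p i) (hRi₀ : Rstar i₀ + p i₀ ≤ 2 ^ s * p i₀)
    (hjj : ∀ k < s, IsGreatest {j | p j ≤ 2 ^ k * p i₀} (jj k))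
    (hihat : ∀ ω, ihat ω ∈ (Finset.range s).image jj)
    (hmin : ∀ ω, ∀ i ∈ (Finset.range s).image jj,
      selectionCriterion c₂ m s (ν (ihat ω)) (pen (ihat ω)) (Lhat (ihat ω) ω (fhat (ihat ω) ω))
        ≤ selectionCriterion c₂ m s (ν i) (pen i) (Lhat i ω (fhat i ω))) :
    ENNReal.ofReal (1 - 2 * c₁ * Real.exp (-m)) ≤
      P {ω | ∀ i, R (fhat (ihat ω) ω) ≤ Rstar i + 2 * p i} := by
  have hcard : ((Finset.range s).image jj).card ≤ s := Finset.card_image_le.trans_eq (by simp)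
  have hRstar_anti : Antitone Rstar := fun i j hij ↦
    (hRstar i).mono (hRstar j) (Set.image_mono (h𝓕 hij))
  have hRstar_nonneg : ∀ i, 0 ≤ Rstar i := fun i ↦
    (hRstar i).2 (Set.forall_mem_image.2 fun f _ ↦ hR f)
  refine ofReal_one_sub_le_measure_of_compl_le (by positivity) ((measure_mono ?_).trans
    (measure_exists_isGLB_add_lt_le hc₁ hc₂ hm hs hcard (fun i _ ↦ hν i) hRstar
      (fun i _ ↦ hERM i) hihat hmin))
  intro ω hω
  simp only [Set.mem_compl_iff, Set.mem_ofPred_eq, not_forall, not_le] at hω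
  obtain ⟨i, hi⟩ := hω
  obtain ⟨k, hk, hki⟩ :=
    exists_grid_add_le_add_two_mul (by omega) hRstar_anti hRstar_nonneg hp0 hpmin hRi₀ hjj i
  refine ⟨jj k, Finset.mem_image_of_mem jj (Finset.mem_range.2 hk), ?_⟩
  rw [← hp]
  linarith

end CoarseGrid

section LinearClassification

variable {D N c₂ m L : ℝ} {s : ℕ}

lemma div_le_compositePenalty_linear (hD : 0 < D) (hN : 1 ≤ N) (hc₂ : 0 ≤ c₂) (hs : 0 < s) :
    D / N ≤ compositePenalty c₂ m s (N / s / D) (√(D / (N / s / D))) := by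
  have hs' : (1 : ℝ) ≤ s := by exact_mod_cast hs
  have hpen : D / N ≤ √(D / (N / s / D)) := by
    apply Real.le_sqrt_of_sq_le
    calc (D / N) ^ 2 = D ^ 2 * 1 / (N * N) := by ring
      _ ≤ D ^ 2 * s / (N * 1) := by gcongr
      _ = D / (N / s / D) := by field_simp
  have hsqrt : 0 ≤ c₂ * √(2 * (m + Real.log s) / (N / s / D)) := by positivity
  unfold compositePenalty
  linarith [Real.sqrt_nonneg (D / (N / s / D))]

lemma two_mul_compositePenalty_linear_le (hD : 0 < D) (hN : 0 < N) (hs : 0 < s) (hsL : s ≤ L)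
    (hc₂ : 0 ≤ c₂) (hm : 0 ≤ m) :
    2 * compositePenalty c₂ m s (N / s / D) (√(D / (N / s / D)))
      ≤ √(D * L / N) * (4 * √D + √8 * c₂ * √(m + Real.log L)) := by
  have := Real.log_natCast_nonneg s
  have hL : 0 < L := lt_of_lt_of_le (by positivity) hsL
  have hsqrt8 : √8 = 2 * √2 := by
    rw [show (8 : ℝ) = 2 ^ 2 * 2 by norm_num, Real.sqrt_mul (by norm_num), Real.sqrt_sq two_pos.le]
  have hpen : √(D / (N / s / D)) ≤ √(D * L / N) * √D := by
    rw [← Real.sqrt_mul (by positivity), show D / (N / s / D) = D * s / N * D by field_simp]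
    gcongr
  have hdev : √(2 * (m + Real.log s) / (N / s / D))
      ≤ √(D * L / N) * (√2 * √(m + Real.log L)) := by
    rw [← Real.sqrt_mul two_pos.le, ← Real.sqrt_mul (by positivity),
      show 2 * (m + Real.log s) / (N / s / D) = D * s / N * (2 * (m + Real.log s)) by field_simp]
    gcongr
  calc 2 * compositePenalty c₂ m s (N / s / D) (√(D / (N / s / D)))
      ≤ 2 * (2 * (√(D * L / N) * √D) + c₂ * (√(D * L / N) * (√2 * √(m + Real.log L)))) := by
        unfold compositePenalty; gcongr
    _ = √(D * L / N) * (4 * √D + √8 * c₂ * √(m + Real.log L)) := by rw [hsqrt8]; ring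

lemma compositePenalty_linear_mono {D' : ℝ} (hD : 0 < D) (hDD' : D ≤ D') (hN : 0 < N) (hs : 0 < s)
    (hc₂ : 0 ≤ c₂) (hm : 0 ≤ m) :
    compositePenalty c₂ m s (N / s / D) (√(D / (N / s / D)))
      ≤ compositePenalty c₂ m s (N / s / D') (√(D' / (N / s / D'))) := by
  have hD' : 0 < D' := hD.trans_le hDD'
  apply compositePenalty_le_compositePenalty hc₂ hm (by positivity) <;> gcongr

lemma add_compositePenalty_linear_le_two_pow_gridSize_mul {B : ℝ} (hB : 0 ≤ B) (hD : 0 < D)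
    (hN : 1 ≤ N) (hc₂ : 0 ≤ c₂) (hs : s = gridSize (B * (N / D))) :
    B + compositePenalty c₂ m s (N / s / D) (√(D / (N / s / D)))
      ≤ 2 ^ s * compositePenalty c₂ m s (N / s / D) (√(D / (N / s / D))) := by
  have hs0 : 0 < s := by rw [hs]; exact one_pos.trans (one_lt_gridSize _)
  have hlower := div_le_compositePenalty_linear (m := m) hD hN hc₂ hs0
  have hYpow : 1 + B * (N / D) ≤ 2 ^ s := by
    rw [hs]
    exact one_add_le_two_pow_gridSize (neg_one_lt_zero.trans_le (by positivity))
  set b := compositePenalty c₂ m s (N / s / D) (√(D / (N / s / D)))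
  have hb : 0 ≤ b := le_trans (by positivity) hlower
  calc B + b = B * (N / D) * (D / N) + b := by
        rw [mul_assoc, div_mul_div_cancel₀ hD.ne', div_self (by positivity), mul_one]
    _ ≤ B * (N / D) * b + b := by gcongr
    _ = (1 + B * (N / D)) * b := by ring
    _ ≤ 2 ^ s * b := by gcongr

end LinearClassification

theorem stmt6_general {Ω F ι : Type*} [MeasurableSpace Ω] [Preorder ι] [DecidableEq ι]
    (P : Measure Ω) [IsProbabilityMeasure P] (i₀ : ι) (𝓕 : ι → Set F) (h𝓕 : Monotone 𝓕)
    (R : F → ℝ) (hR : ∀ f, 0 ≤ R f)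
    (Rstar : ι → ℝ) (hRstar : ∀ i, IsGLB (R '' 𝓕 i) (Rstar i))
    (c₁ c₂ m B n T : ℝ) (hc₁ : 0 ≤ c₁) (hc₂ : 0 ≤ c₂) (hm : 0 ≤ m) (hBpos : 0 < B)
    (hB : Rstar i₀ ≤ B) (d : ι → ℝ) (hd₀ : 0 < d i₀) (hd : ∀ i, d i₀ ≤ d i)
    (hT1 : 1 ≤ n * T) (hT2 : d i₀ / B ≤ n * T)
    (s : ℕ) (hs : s = gridSize (B * (n * T / d i₀)))
    (ν : ι → ℝ) (hν : ∀ i, ν i = n * (T / s) / d i)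
    (pen : ι → ℝ) (hpen : ∀ i, pen i = √(d i / ν i))
    (fhat : ι → Ω → F) (Lhat : ι → Ω → F → ℝ)
    (hERM : ∀ i, IsConcentratedERM P (𝓕 i) R (ν i) (pen i) c₁ c₂ (fhat i) (Lhat i))
    (p : ι → ℝ) (hp : ∀ i, p i = compositePenalty c₂ m s (ν i) (pen i))
    (jj : ℕ → ι) (hjj : ∀ k < s, IsGreatest {j | p j ≤ 2 ^ k * p i₀} (jj k))
    (ihat : Ω → ι) (hihat : ∀ ω, ihat ω ∈ (Finset.range s).image jj)
    (hmin : ∀ ω, ∀ i ∈ (Finset.range s).image jj,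
      selectionCriterion c₂ m s (ν (ihat ω)) (pen (ihat ω)) (Lhat (ihat ω) ω (fhat (ihat ω) ω))
        ≤ selectionCriterion c₂ m s (ν i) (pen i) (Lhat i ω (fhat i ω))) :
    ENNReal.ofReal (1 - 2 * c₁ * Real.exp (-m)) ≤
      P {ω | ∀ i, R (fhat (ihat ω) ω) ≤
        Rstar i + √(d i * Real.logb 2 (16 * B * n * T / d i₀) / (n * T))
          * (4 * √(d i) + √8 * c₂
            * √(m + Real.log (Real.logb 2 (16 * B * n * T / d i₀))))} := by
  have hN : 0 < n * T := one_pos.trans_le hT1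
  have hY : 1 ≤ B * (n * T / d i₀) := by
    rw [div_le_iff₀ hBpos] at hT2
    rw [← mul_div_assoc, one_le_div hd₀]
    linarith
  have hs1 : 1 < s := hs ▸ one_lt_gridSize _
  have hs0 : 0 < s := by omega
  have hdpos : ∀ i, 0 < d i := fun i ↦ hd₀.trans_le (hd i)
  have hν' : ∀ i, ν i = n * T / s / d i := fun i ↦ by rw [hν, ← mul_div_assoc]
  have hp' : ∀ i, p i = compositePenalty c₂ m s (n * T / s / d i) √(d i / (n * T / s / d i)) :=
    fun i ↦ by rw [hp, hpen, hν']
  have hp0 : 0 < p i₀ := hp' i₀ ▸ lt_of_lt_of_le (by positivity)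
    (div_le_compositePenalty_linear hd₀ hT1 hc₂ hs0)
  have hRi₀ : Rstar i₀ + p i₀ ≤ 2 ^ s * p i₀ := (add_le_add_left hB _).trans
    (hp' i₀ ▸ add_compositePenalty_linear_le_two_pow_gridSize_mul hBpos.le hd₀ hT1 hc₂ hs)
  have hsL : (s : ℝ) ≤ Real.logb 2 (16 * B * n * T / d i₀) := by
    rw [show 16 * B * n * T / d i₀ = 16 * (B * (n * T / d i₀)) by ring, hs]
    exact gridSize_le_logb hY
  refine (coarseGrid_oracle_inequality h𝓕 hR hRstar hc₁ hc₂ hm hs1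
    (fun i ↦ by have := hdpos i; rw [hν']; positivity) hERM hp hp0
    (fun i ↦ by rw [hp', hp']; exact compositePenalty_linear_mono hd₀ (hd i) hN hs0 hc₂ hm)
    hRi₀ hjj hihat hmin).trans (measure_mono fun ω hω i ↦ (hω i).trans ?_)
  rw [hp']
  exact add_le_add_right (two_mul_compositePenalty_linear_le (hdpos i) hN hs0 hsL hc₂ hm) _

/-- Corollary 1(b) of Agarwal–Bartlett–Duchi: the coarse-grid model-selection
algorithm applied to linear classification in increasing dimensions, where
class `i` processes `nᵢ(t) = n t / dᵢ` samples under budget `t` and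
`penᵢ(t) = √(dᵢ / nᵢ(t)) = dᵢ / √(n t)`.  Provided `nT ≥ 1` and
`nT ≥ d₁/B`, with probability at least `1 - 2c₁ exp(-m)` the output satisfies
the stated oracle inequality.  (Classes are indexed by `ℕ`, with index `0`
playing the role of class `1`; budgets and sample sizes are real.) -/
theorem stmt6 {Ω : Type*} [MeasurableSpace Ω] (P : Measure Ω) [IsProbabilityMeasure P]
    {F : Type*} (𝓕 : ℕ → Set F)
    (hnested : ∀ i j : ℕ, i ≤ j → 𝓕 i ⊆ 𝓕 j)
    (R : F → ℝ) (hRnonneg : ∀ f, 0 ≤ R f)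
    (Rstar : ℕ → ℝ) (hRstar : ∀ i, IsGLB (R '' 𝓕 i) (Rstar i))
    (c₁ c₂ : ℝ) (hc₁ : 0 < c₁) (hc₂ : 0 < c₂)
    (m : ℝ) (hm : 0 ≤ m)
    (B : ℝ) (hBpos : 0 < B) (hB : Rstar 0 ≤ B)
    (n : ℝ) (hn : 0 < n)
    (d : ℕ → ℝ) (hd0 : 0 < d 0) (hdm : StrictMono d)
    (hddiv : Filter.Tendsto d Filter.atTop Filter.atTop)
    (T : ℝ) (hT : 0 < T)
    (hT1 : 1 ≤ n * T) (hT2 : d 0 / B ≤ n * T)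
    (nsamp : ℕ → ℝ → ℝ) (hnsamp : ∀ (i : ℕ) (t : ℝ), nsamp i t = n * t / d i)
    (pen : ℕ → ℝ → ℝ)
    (hpen : ∀ (i : ℕ) (t : ℝ), pen i t = Real.sqrt (d i / nsamp i t))
    (fhat : ℕ → ℝ → Ω → F) (Lhat : ℕ → ℝ → Ω → F → ℝ)
    (hmem : ∀ i t ω, fhat i t ω ∈ 𝓕 i)
    (hERM : ∀ (i : ℕ) (t : ℝ), ∀ᵐ ω ∂P, ∀ f ∈ 𝓕 i,
      Lhat i t ω (fhat i t ω) ≤ Lhat i t ω f + pen i t)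
    (hconc1 : ∀ (i : ℕ) (t ε : ℝ), 0 < ε →
      P {ω | pen i t + c₂ * ε < |Lhat i t ω (fhat i t ω) - R (fhat i t ω)|}
        ≤ ENNReal.ofReal (c₁ * Real.exp (-4 * nsamp i t * ε ^ 2)))
    (hconc2 : ∀ (i : ℕ) (t : ℝ), ∀ f ∈ 𝓕 i, ∀ ε : ℝ, 0 < ε →
      P {ω | c₂ * ε < |Lhat i t ω f - R f|}
        ≤ ENNReal.ofReal (c₁ * Real.exp (-4 * nsamp i t * ε ^ 2)))
    (s : ℕ) (hs : s = ⌈Real.logb 2 (1 + B * (n * T / d 0))⌉₊ + 2)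
    (pbar : ℕ → ℝ)
    (hpbar : ∀ i, pbar i = 2 * pen i (T / s)
      + c₂ * Real.sqrt (2 * (m + Real.log s) / nsamp i (T / s)))
    (jj : ℕ → ℕ)
    (hjj : ∀ k < s, pbar (jj k) ≤ 2 ^ k * pbar 0 ∧
      ∀ j : ℕ, pbar j ≤ 2 ^ k * pbar 0 → j ≤ jj k)
    (S : Finset ℕ) (hSdef : S = (Finset.range s).image jj)
    (ihat : Ω → ℕ)
    (hihat_mem : ∀ ω, ihat ω ∈ S)
    (hihat_min : ∀ ω, ∀ i ∈ S,
      Lhat (ihat ω) (T / s) ω (fhat (ihat ω) (T / s) ω) + pen (ihat ω) (T / s)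
        + c₂ / 2 * Real.sqrt (m / nsamp (ihat ω) (T / s))
        + c₂ / 2 * Real.sqrt (Real.log s / nsamp (ihat ω) (T / s))
      ≤ Lhat i (T / s) ω (fhat i (T / s) ω) + pen i (T / s)
        + c₂ / 2 * Real.sqrt (m / nsamp i (T / s))
        + c₂ / 2 * Real.sqrt (Real.log s / nsamp i (T / s))) :
    ENNReal.ofReal (1 - 2 * c₁ * Real.exp (-m)) ≤
      P {ω | ∀ i : ℕ, R (fhat (ihat ω) (T / s) ω) ≤
        Rstar i + Real.sqrt (d i * Real.logb 2 (16 * B * n * T / d 0) / (n * T))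
          * (4 * Real.sqrt (d i)
            + Real.sqrt 8 * c₂
              * Real.sqrt (m + Real.log (Real.logb 2 (16 * B * n * T / d 0))))} := by
  subst hSdef
  exact stmt6_general P 0 𝓕 hnested R hRnonneg Rstar hRstar c₁ c₂ m B n T hc₁.le hc₂.le hm hBpos hB
    d hd0 (fun i ↦ hdm.monotone i.zero_le) hT1 hT2 s hs (nsamp · (T / s)) (hnsamp · (T / s))
    (pen · (T / s)) (hpen · (T / s)) (fhat · (T / s)) (Lhat · (T / s))
    (fun i ↦ ⟨hERM i (T / s), hconc1 i (T / s), hconc2 i (T / s)⟩)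
    pbar hpbar jj hjj ihat hihat_mem hihat_min
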